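/- Assume the dataset D has ℓ¹ diameter at most 1. Then for every z ∈ ℝ^d, the mixup-plus-noise output densities of D and D' = D \ {x₀} satisfy the two-sided pointwise bound exp(−1/(kσ)) · q(z) ≤ p(z) ≤ exp(1/(kσ)) · q(z); in particular, a single draw of the mixup-plus-Laplacian-noise mechanism on a dataset of ℓ¹ diameter at most 1 with mixture width k satisfies a pointwise density-ratio (privacy) bound of exp(1/(kσ)), which is the classical Laplacian-mechanism guarantee exp(1/σ) improved by a factor of k in the exponent. -/

import Mathlib

open Finset

/-- The d-dimensional isotropic Laplacian density with scale σ. -/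
noncomputable def laplacianDensity (d : ℕ) (σ : ℝ) (η : Fin d → ℝ) : ℝ :=
  ((2 * σ) ^ d)⁻¹ * Real.exp (-(∑ i, |η i|) / σ)

/-- The mixup-plus-noise output density of a finite dataset `P`. -/
noncomputable def mixupDensity (d : ℕ) (σ : ℝ) (k : ℕ) (P : Finset (Fin d → ℝ))
    (z : Fin d → ℝ) : ℝ :=
  ((P.card.choose k : ℝ))⁻¹ *
    ∑ S ∈ P.powersetCard k, laplacianDensity d σ (z - (k : ℝ)⁻¹ • ∑ x ∈ S, x)

/-!
Condition a uniform `k`-subset of `D` on whether it contains `x₀`. If it does not, it is a uniform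
`k`-subset of `D \ {x₀}`; if it does, it is `T ∪ {x₀}` for a uniform `(k - 1)`-subset `T` of
`D \ {x₀}`. Hence `p` is a convex combination of `q` and of the mean of the mixture components of
the sets `T ∪ {x₀}`. A uniform `k`-subset of `D \ {x₀}` also has the form `T ∪ {y}`, with `y`
uniform outside `T`, and replacing `y` by `x₀` moves the average of the set by at most `1 / k` in
`ℓ¹`, which changes the Laplacian density by a factor of at most `exp (1 / (k * σ))`.
-/

open scoped BigOperators

section ExpectPowersetCard

variable {α M R : Type*} [DecidableEq α]

lemma sum_powersetCard_sum_sdiff_insert [AddCommMonoid M] (s : Finset α) (j : ℕ)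
    (f : Finset α → α → M) :
    ∑ T ∈ s.powersetCard j, ∑ y ∈ s \ T, f (insert y T) y =
      ∑ S ∈ s.powersetCard (j + 1), ∑ y ∈ S, f S y := by
  rw [sum_sigma', sum_sigma']
  refine sum_nbij' (fun p ↦ ⟨insert p.2 p.1, p.2⟩) (fun p ↦ ⟨p.1.erase p.2, p.2⟩) ?_ ?_ ?_ ?_ ?_
  · rintro ⟨T, y⟩ h
    simp only [mem_sigma, mem_powersetCard, mem_sdiff] at h ⊢
    obtain ⟨⟨hTs, hcard⟩, hys, hyT⟩ := h
    exact ⟨⟨insert_subset hys hTs, by rw [card_insert_of_notMem hyT, hcard]⟩, mem_insert_self y T⟩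
  · rintro ⟨S, y⟩ h
    simp only [mem_sigma, mem_powersetCard, mem_sdiff] at h ⊢
    obtain ⟨⟨hSs, hcard⟩, hyS⟩ := h
    refine ⟨⟨(erase_subset y S).trans hSs, ?_⟩, hSs hyS, notMem_erase y S⟩
    rw [card_erase_of_mem hyS, hcard, Nat.add_sub_cancel]
  · rintro ⟨T, y⟩ h
    simp only [mem_sigma, mem_sdiff] at h
    simp only [erase_insert h.2.2]
  · rintro ⟨S, y⟩ h
    simp only [mem_sigma] at h
    simp only [insert_erase h.2]
  · exact fun _ _ ↦ rfl

lemma expect_powersetCard_succ [AddCommMonoid M] [Module ℚ≥0 M] (s : Finset α) (j : ℕ)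
    (f : Finset α → M) :
    𝔼 S ∈ s.powersetCard (j + 1), f S =
      𝔼 T ∈ s.powersetCard j, 𝔼 y ∈ s \ T, f (insert y T) := by
  have hcard_sdiff : ∀ T ∈ s.powersetCard j, #(s \ T) = #s - j := fun T hT ↦ by
    obtain ⟨hTs, hcard⟩ := mem_powersetCard.1 hT
    rw [card_sdiff_of_subset hTs, hcard]
  have hsum_const : ∀ S ∈ s.powersetCard (j + 1), ∑ _y ∈ S, f S = ((j + 1 : ℕ) : ℚ≥0) • f S :=
    fun S hS ↦ by rw [sum_const, (mem_powersetCard.1 hS).2, Nat.cast_smul_eq_nsmul]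
  have hchoose : ((#s).choose (j + 1) : ℚ≥0) * (j + 1 : ℕ) = (#s).choose j * (#s - j : ℕ) :=
    mod_cast Nat.choose_succ_right_eq #s j
  have hj : ((j + 1 : ℕ) : ℚ≥0) ≠ 0 := mod_cast j.succ_ne_zero
  calc
    𝔼 S ∈ s.powersetCard (j + 1), f S
    _ = ((#s).choose (j + 1) : ℚ≥0)⁻¹ • ∑ S ∈ s.powersetCard (j + 1), f S := by
      rw [expect, card_powersetCard]
    _ = ((#s).choose j * (#s - j : ℕ) : ℚ≥0)⁻¹ •
          ∑ S ∈ s.powersetCard (j + 1), ∑ _y ∈ S, f S := by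
      rw [sum_congr rfl hsum_const, ← smul_sum, smul_smul, ← hchoose, mul_inv,
        inv_mul_cancel_right₀ hj]
    _ = ((#s).choose j * (#s - j : ℕ) : ℚ≥0)⁻¹ •
          ∑ T ∈ s.powersetCard j, ∑ y ∈ s \ T, f (insert y T) := by
      rw [sum_powersetCard_sum_sdiff_insert s j fun S _ ↦ f S]
    _ = 𝔼 T ∈ s.powersetCard j, 𝔼 y ∈ s \ T, f (insert y T) := by
      rw [expect, card_powersetCard, mul_inv, mul_smul, smul_sum]
      congr 1
      exact sum_congr rfl fun T hT ↦ by rw [expect, hcard_sdiff T hT]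

lemma expect_union_mem_segment [AddCommMonoid M] [Module ℚ≥0 M] {s t : Finset α}
    (hst : Disjoint s t) (f : α → M) :
    𝔼 i ∈ s ∪ t, f i ∈ segment ℚ≥0 (𝔼 i ∈ s, f i) (𝔼 i ∈ t, f i) := by
  obtain h | h := (s ∪ t).eq_empty_or_nonempty
  · obtain ⟨rfl, rfl⟩ := union_eq_empty.1 h
    exact left_mem_segment ℚ≥0 _ _
  have hcard : (#(s ∪ t) : ℚ≥0) ≠ 0 := mod_cast h.card_ne_zero
  refine ⟨#s / #(s ∪ t), #t / #(s ∪ t), zero_le, zero_le, ?_, ?_⟩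
  · rw [← add_div, ← Nat.cast_add, ← card_union_of_disjoint hst, div_self hcard]
  · rw [expect.eq_def (s ∪ t), sum_union hst, ← card_smul_expect s, ← card_smul_expect t,
      div_eq_inv_mul, div_eq_inv_mul, mul_smul, mul_smul, ← smul_add, Nat.cast_smul_eq_nsmul,
      Nat.cast_smul_eq_nsmul]

lemma expect_powersetCard_succ_insert_mem_segment [AddCommMonoid M] [Module ℚ≥0 M] {s : Finset α}
    {x : α} (hx : x ∉ s) (j : ℕ) (f : Finset α → M) :
    𝔼 S ∈ (insert x s).powersetCard (j + 1), f S ∈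
      segment ℚ≥0 (𝔼 S ∈ s.powersetCard (j + 1), f S) (𝔼 T ∈ s.powersetCard j, f (insert x T)) := by
  have hnotMem {i : ℕ} {T : Finset α} (hT : T ∈ s.powersetCard i) : x ∉ T :=
    fun hxT ↦ hx ((mem_powersetCard.1 hT).1 hxT)
  have hdisj : Disjoint (s.powersetCard (j + 1)) ((s.powersetCard j).image (insert x)) := by
    simp only [disjoint_right, forall_mem_image]
    exact fun T _ hT ↦ hnotMem hT (mem_insert_self x T)
  have hinj : Set.InjOn (insert x) (s.powersetCard j : Set (Finset α)) :=
    insert_erase_invOn.2.injOn.mono fun _ ↦ hnotMem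
  rw [powersetCard_succ_insert hx, ← expect_image hinj]
  exact expect_union_mem_segment hdisj f

variable [Field R] [LinearOrder R] [IsStrictOrderedRing R] {s : Finset α} {x : α} {j : ℕ}
  {f : Finset α → R} {a b : R}

lemma expect_insert_mem_Icc_of_replace (hj : j < #s)
    (hf : ∀ T ∈ s.powersetCard j, ∀ y ∈ s \ T,
      f (insert x T) ∈ Set.Icc (a * f (insert y T)) (b * f (insert y T))) :
    𝔼 T ∈ s.powersetCard j, f (insert x T) ∈
      Set.Icc (a * 𝔼 S ∈ s.powersetCard (j + 1), f S)
        (b * 𝔼 S ∈ s.powersetCard (j + 1), f S) := by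
  have hne : ∀ T ∈ s.powersetCard j, (s \ T).Nonempty := fun T hT ↦
    sdiff_nonempty_of_card_lt_card ((mem_powersetCard.1 hT).2.trans_lt hj)
  simp only [expect_powersetCard_succ, mul_expect]
  exact ⟨expect_le_expect fun T hT ↦ expect_le (hne T hT) fun y hy ↦ (hf T hT y hy).1,
    expect_le_expect fun T hT ↦ le_expect (hne T hT) fun y hy ↦ (hf T hT y hy).2⟩

lemma expect_powersetCard_insert_mem_Icc_of_replace (hx : x ∉ s) (hj : j < #s) (ha : a ≤ 1)
    (hb : 1 ≤ b) (hf₀ : ∀ S, 0 ≤ f S)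
    (hf : ∀ T ∈ s.powersetCard j, ∀ y ∈ s \ T,
      f (insert x T) ∈ Set.Icc (a * f (insert y T)) (b * f (insert y T))) :
    𝔼 S ∈ (insert x s).powersetCard (j + 1), f S ∈
      Set.Icc (a * 𝔼 S ∈ s.powersetCard (j + 1), f S)
        (b * 𝔼 S ∈ s.powersetCard (j + 1), f S) := by
  have hmean : 0 ≤ 𝔼 S ∈ s.powersetCard (j + 1), f S := expect_nonneg fun S _ ↦ hf₀ S
  exact (convex_Icc _ _).segment_subset
    ⟨mul_le_of_le_one_left hmean ha, le_mul_of_one_le_left hmean hb⟩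
    (expect_insert_mem_Icc_of_replace hj hf)
    (expect_powersetCard_succ_insert_mem_segment hx j f)

end ExpectPowersetCard

section Laplacian

variable {d k : ℕ} {σ r : ℝ}

lemma laplacianDensity_nonneg (hσ : 0 < σ) (η : Fin d → ℝ) : 0 ≤ laplacianDensity d σ η := by
  unfold laplacianDensity
  positivity

lemma laplacianDensity_le_exp_mul (hσ : 0 < σ) {η ξ : Fin d → ℝ} (h : ∑ i, |η i - ξ i| ≤ r) :
    laplacianDensity d σ η ≤ Real.exp (r / σ) * laplacianDensity d σ ξ := by
  have htriangle : ∑ i, |ξ i| ≤ r + ∑ i, |η i| := calc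
    ∑ i, |ξ i| ≤ ∑ i, (|η i - ξ i| + |η i|) :=
      sum_le_sum fun i _ ↦ by
        rw [abs_sub_comm]
        exact sub_le_iff_le_add.1 (abs_sub_abs_le_abs_sub (ξ i) (η i))
    _ ≤ r + ∑ i, |η i| := by rw [sum_add_distrib]; gcongr
  unfold laplacianDensity
  rw [mul_left_comm, ← Real.exp_add, ← add_div]
  gcongr
  linarith

/-- The component of the mixture `mixupDensity d σ k P` contributed by the `k`-subset `S` of `P`:
the Laplacian density centred at the average of `S`. The divisor is the parameter `k`, not the
cardinality of `S`. -/
noncomputable def mixupComponent (d : ℕ) (σ : ℝ) (k : ℕ) (z : Fin d → ℝ)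
    (S : Finset (Fin d → ℝ)) : ℝ :=
  laplacianDensity d σ (z - (k : ℝ)⁻¹ • ∑ x ∈ S, x)

lemma mixupComponent_nonneg (hσ : 0 < σ) (z : Fin d → ℝ) (S : Finset (Fin d → ℝ)) :
    0 ≤ mixupComponent d σ k z S :=
  laplacianDensity_nonneg hσ _

lemma mixupDensity_eq_expect (d : ℕ) (σ : ℝ) (k : ℕ) (P : Finset (Fin d → ℝ)) (z : Fin d → ℝ) :
    mixupDensity d σ k P z = 𝔼 S ∈ P.powersetCard k, mixupComponent d σ k z S := by
  rw [expect_eq_sum_div_card, card_powersetCard, div_eq_inv_mul]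
  rfl

lemma mixupComponent_insert_le_exp_mul (hσ : 0 < σ) {x y : Fin d → ℝ} {T : Finset (Fin d → ℝ)}
    (hx : x ∉ T) (hy : y ∉ T) (hxy : ∑ i, |x i - y i| ≤ r) (z : Fin d → ℝ) :
    mixupComponent d σ k z (insert x T) ≤
      Real.exp (r / (k * σ)) * mixupComponent d σ k z (insert y T) := by
  rw [← div_div]
  refine laplacianDensity_le_exp_mul hσ ?_
  have hcoord (i : Fin d) :
      (z - (k : ℝ)⁻¹ • ∑ w ∈ insert x T, w) i - (z - (k : ℝ)⁻¹ • ∑ w ∈ insert y T, w) i =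
        (y i - x i) / k := by
    simp only [sum_insert hx, sum_insert hy, Pi.sub_apply, Pi.smul_apply, Pi.add_apply,
      smul_eq_mul]
    ring
  simp only [hcoord, abs_div, Nat.abs_cast, ← sum_div, abs_sub_comm (y _)]
  gcongr

lemma mixupComponent_insert_mem_Icc (hσ : 0 < σ) {x y : Fin d → ℝ} {T : Finset (Fin d → ℝ)}
    (hx : x ∉ T) (hy : y ∉ T) (hxy : ∑ i, |x i - y i| ≤ r) (z : Fin d → ℝ) :
    mixupComponent d σ k z (insert x T) ∈
      Set.Icc (Real.exp (-(r / (k * σ))) * mixupComponent d σ k z (insert y T))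
        (Real.exp (r / (k * σ)) * mixupComponent d σ k z (insert y T)) := by
  refine ⟨?_, mixupComponent_insert_le_exp_mul hσ hx hy hxy z⟩
  rw [Real.exp_neg, inv_mul_le_iff₀ (Real.exp_pos _)]
  exact mixupComponent_insert_le_exp_mul hσ hy hx (by simpa only [abs_sub_comm] using hxy) z

end Laplacian

theorem mixup_density_pointwise_privacy_bound_general
    {d : ℕ} {σ : ℝ} (hσ : 0 < σ) {D : Finset (Fin d → ℝ)} {x₀ : Fin d → ℝ} (hx₀ : x₀ ∈ D)
    {r : ℝ} (hdist : ∀ y ∈ D, ∑ i, |x₀ i - y i| ≤ r)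
    {k : ℕ} (hk : 1 ≤ k) (hkD : k < #D) (z : Fin d → ℝ) :
    Real.exp (-(r / (k * σ))) * mixupDensity d σ k (D.erase x₀) z ≤ mixupDensity d σ k D z ∧
    mixupDensity d σ k D z ≤ Real.exp (r / (k * σ)) * mixupDensity d σ k (D.erase x₀) z := by
  obtain ⟨j, rfl⟩ := Nat.exists_eq_add_of_le' hk
  have hr : 0 ≤ r / ((j + 1 : ℕ) * σ) := by
    have : 0 ≤ r := by simpa using hdist x₀ hx₀
    positivity
  have hj : j < #(D.erase x₀) := by rw [card_erase_of_mem hx₀]; omega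
  have hreplace : ∀ T ∈ (D.erase x₀).powersetCard j, ∀ y ∈ D.erase x₀ \ T,
      mixupComponent d σ (j + 1) z (insert x₀ T) ∈
        Set.Icc
          (Real.exp (-(r / ((j + 1 : ℕ) * σ))) * mixupComponent d σ (j + 1) z (insert y T))
          (Real.exp (r / ((j + 1 : ℕ) * σ)) * mixupComponent d σ (j + 1) z (insert y T)) := by
    intro T hT y hy
    have hx₀T : x₀ ∉ T := fun h ↦ notMem_erase x₀ D ((mem_powersetCard.1 hT).1 h)
    obtain ⟨hyD, hyT⟩ := mem_sdiff.1 hy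
    exact mixupComponent_insert_mem_Icc hσ hx₀T hyT (hdist y (mem_of_mem_erase hyD)) z
  have hmem := expect_powersetCard_insert_mem_Icc_of_replace (notMem_erase x₀ D) hj
    (Real.exp_le_one_iff.2 (neg_nonpos.2 hr)) (Real.one_le_exp hr)
    (mixupComponent_nonneg hσ z) hreplace
  rw [insert_erase hx₀] at hmem
  simpa only [mixupDensity_eq_expect, Set.mem_Icc] using hmem

/-- If `D` has ℓ¹ diameter at most 1, then for every `z ∈ ℝ^d`,
`exp(−1/(kσ))·q(z) ≤ p(z) ≤ exp(1/(kσ))·q(z)`: a single draw of the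
mixup-plus-Laplacian-noise mechanism with mixture width `k` satisfies a pointwise
density-ratio (privacy) bound of `exp(1/(kσ))`, improving the classical Laplacian
guarantee `exp(1/σ)` by a factor of `k` in the exponent. -/
theorem mixup_density_pointwise_privacy_bound
    (d : ℕ) (hd : 1 ≤ d) (σ : ℝ) (hσ : 0 < σ)
    (D : Finset (Fin d → ℝ)) (n : ℕ) (hn : D.card = n)
    (hdiam : ∀ x ∈ D, ∀ y ∈ D, ∑ i, |x i - y i| ≤ 1)
    (x₀ : Fin d → ℝ) (hx₀ : x₀ ∈ D)
    (k : ℕ) (hk1 : 1 ≤ k) (hkn : k ≤ n - 1)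
    (z : Fin d → ℝ) :
    Real.exp (-(1 / (k * σ))) * mixupDensity d σ k (D.erase x₀) z
        ≤ mixupDensity d σ k D z ∧
    mixupDensity d σ k D z
        ≤ Real.exp (1 / (k * σ)) * mixupDensity d σ k (D.erase x₀) z := by
  exact mixup_density_pointwise_privacy_bound_general hσ hx₀ (hdiam x₀ hx₀) hk1 (by omega) z
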